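/- Let d_C ≥ 1 and d₁, d₂ ≥ 1 with d₁·d₂ ≥ 2. Let ψ be a complex positive semidefinite matrix of trace 1 acting on ℂ^{d_C} ⊗ ℂ^{d₁} ⊗ ℂ^{d₂}, and let ψ_C denote its partial trace over the second and third factors. Equip the unitary group U(d₁d₂) with its Haar probability measure, and for U ∈ U(d₁d₂) define σ(U)^{CA₂} := Tr_{A₁}[(1_{d_C} ⊗ U) ψ (1_{d_C} ⊗ U)*], the partial trace of the conjugated state over the middle factor ℂ^{d₁}. Then ∫_{U(d₁d₂)} Tr[(σ(U)^{CA₂} − ψ_C ⊗ (1/d₂)·1_{d₂})²] dU = (d₂² − 1)·(d₁d₂·Tr(ψ²) − Tr(ψ_C²)) / (d₂·((d₁d₂)² − 1)). -/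

import Mathlib

open MeasureTheory Matrix Kronecker
open scoped ComplexOrder

/-- The state of the reference `C` and the remaining black hole `A₂` after the black hole
dynamics `U`: partial trace over the emitted radiation `A₁` of `(1 ⊗ U) ψ (1 ⊗ U)*`. -/
noncomputable def sigmaCA2 {dC d₁ d₂ : ℕ}
    (ψ : Matrix (Fin dC × (Fin d₁ × Fin d₂)) (Fin dC × (Fin d₁ × Fin d₂)) ℂ)
    (U : Matrix.unitaryGroup (Fin d₁ × Fin d₂) ℂ) :
    Matrix (Fin dC × Fin d₂) (Fin dC × Fin d₂) ℂ :=
  Matrix.of fun p q => ∑ a₁ : Fin d₁,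
    (((1 : Matrix (Fin dC) (Fin dC) ℂ) ⊗ₖ (U : Matrix (Fin d₁ × Fin d₂) (Fin d₁ × Fin d₂) ℂ))
        * ψ *
      ((1 : Matrix (Fin dC) (Fin dC) ℂ) ⊗ₖ (U : Matrix (Fin d₁ × Fin d₂) (Fin d₁ × Fin d₂) ℂ))ᴴ)
      (p.1, (a₁, p.2)) (q.1, (a₁, q.2))

/-- Partial trace over the second and third tensor factors. -/
noncomputable def ptraceC {dC d₁ d₂ : ℕ}
    (ψ : Matrix (Fin dC × (Fin d₁ × Fin d₂)) (Fin dC × (Fin d₁ × Fin d₂)) ℂ) :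
    Matrix (Fin dC) (Fin dC) ℂ :=
  Matrix.of fun c c' => ∑ a : Fin d₁ × Fin d₂, ψ (c, a) (c', a)


namespace Matrix

variable {n : Type*} [Fintype n] [DecidableEq n]

/-- The Hadamard gate acting on the two coordinates `p` and `q`. -/
noncomputable def hadamardOn (p q : n) : Matrix n n ℂ :=
  Matrix.of fun i j =>
    if i = p then ((√2 : ℝ) : ℂ)⁻¹ * ((if j = p then 1 else 0) + (if j = q then 1 else 0))
    else if i = q then ((√2 : ℝ) : ℂ)⁻¹ * ((if j = p then 1 else 0) - (if j = q then 1 else 0))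
    else if j = i then 1 else 0

lemma sum_hadamardOn_mul (p q i : n) (f : n → ℂ) :
    ∑ j, hadamardOn p q i j * f j =
      if i = p then ((√2 : ℝ) : ℂ)⁻¹ * (f p + f q)
      else if i = q then ((√2 : ℝ) : ℂ)⁻¹ * (f p - f q) else f i := by
  unfold hadamardOn
  simp only [Matrix.of_apply]
  split_ifs <;>
    simp [mul_assoc, add_mul, sub_mul, ← Finset.mul_sum, Finset.sum_add_distrib,
      Finset.sum_sub_distrib]

lemma inv_sqrt_two_mul_self : ((√2 : ℝ) : ℂ)⁻¹ * ((√2 : ℝ) : ℂ)⁻¹ = 1 / 2 := by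
  rw [← mul_inv, ← Complex.ofReal_mul, Real.mul_self_sqrt (by norm_num)]
  norm_num

omit [Fintype n] in
lemma star_hadamardOn_apply (p q i j : n) :
    star (hadamardOn p q i j) = hadamardOn p q i j := by
  unfold hadamardOn
  simp only [Matrix.of_apply]
  split_ifs <;> simp

lemma hadamardOn_mem_unitaryGroup {p q : n} (hpq : p ≠ q) :
    hadamardOn p q ∈ unitaryGroup n ℂ := by
  rw [mem_unitaryGroup_iff]
  ext i k
  simp only [mul_apply, star_apply, star_hadamardOn_apply, sum_hadamardOn_mul]
  have h := inv_sqrt_two_mul_self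
  unfold hadamardOn
  simp only [Matrix.of_apply, one_apply]
  split_ifs <;> simp_all <;> grind

/-- The diagonal matrix with entry `I` at `m` and `1` elsewhere. -/
noncomputable def phaseAt (m : n) : Matrix n n ℂ :=
  diagonal fun i => if i = m then Complex.I else 1

lemma phaseAt_mem_unitaryGroup (m : n) : phaseAt m ∈ unitaryGroup n ℂ := by
  rw [mem_unitaryGroup_iff, phaseAt, star_eq_conjTranspose, diagonal_conjTranspose,
    diagonal_mul_diagonal, ← diagonal_one]
  congr 1
  ext i
  by_cases h : i = m <;> simp [h]

/-- A four-index tensor invariant under `V ⊗ V̄ ⊗ V ⊗ V̄` for every unitary `V` is a combination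
of the two pairings of the indices. -/
lemma exists_eq_of_unitary_invariant (T : n → n → n → n → ℂ)
    (hT : ∀ V ∈ unitaryGroup n ℂ, ∀ i k j l, T i k j l =
      ∑ i', V i i' * ∑ k', star (V k k') * ∑ j', V j j' * ∑ l', star (V l l') * T i' k' j' l') :
    ∃ α β : ℂ, ∀ i k j l, T i k j l =
      α * (if i = k ∧ j = l then 1 else 0) + β * (if i = l ∧ j = k then 1 else 0) := by
  have hphase (m i k j l : n) : T i k j l =
      (if i = m then Complex.I else 1) * (if k = m then -Complex.I else 1) *
        (if j = m then Complex.I else 1) * (if l = m then -Complex.I else 1) * T i k j l := by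
    conv_lhs => rw [hT _ (phaseAt_mem_unitaryGroup m) i k j l]
    simp only [phaseAt, diagonal_apply, ite_mul, zero_mul, Finset.sum_ite_eq, Finset.mem_univ,
      if_true, apply_ite (star : ℂ → ℂ), star_zero, star_one, Complex.star_def, Complex.conj_I]
    split_ifs <;> ring
  have hzero (i k j l : n) (h₁ : ¬ (i = k ∧ j = l)) (h₂ : ¬ (i = l ∧ j = k)) :
      T i k j l = 0 := by
    have hi := hphase i i k j l
    have hj := hphase j i k j l
    have hII := Complex.I_mul_I
    have hI : (1 - Complex.I) * (1 + Complex.I) = 2 := by linear_combination -hII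
    grind
  have hhad {p q : n} (hpq : p ≠ q) := hT _ (hadamardOn_mem_unitaryGroup hpq)
  simp only [star_hadamardOn_apply, sum_hadamardOn_mul] at hhad
  have hs := inv_sqrt_two_mul_self
  set s : ℂ := ((√2 : ℝ) : ℂ)⁻¹
  have hs4 (z : ℂ) : s * (s * (s * (s * z))) = z / 4 := by
    linear_combination (s * s + 1 / 2) * z * hs
  have hs2 (z : ℂ) : s * (s * z) = z / 2 := by linear_combination z * hs
  have hpair {p q : n} (hpq : p ≠ q) : T p p p p = T q q q q ∧ T p p q q = T q q p p ∧
      T p q q p = T p p p p - T p p q q := by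
    have e₁ := hhad hpq p p p p
    have e₂ := hhad hpq q q q q
    have e₃ := hhad hpq p p q q
    have e₄ := hhad hpq q q p p
    have e₅ := hhad hpq p q q p
    have z₁ := hzero p p p q (by simp [hpq]) (by simp [hpq])
    have z₂ := hzero p p q p (by simp [hpq.symm]) (by simp [hpq.symm])
    have z₃ := hzero p q p p (by simp [hpq]) (by simp [hpq])
    have z₄ := hzero q p p p (by simp [hpq.symm]) (by simp [hpq.symm])
    have z₅ := hzero q q q p (by simp [hpq.symm]) (by simp [hpq.symm])
    have z₆ := hzero q q p q (by simp [hpq]) (by simp [hpq])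
    have z₇ := hzero q p q q (by simp [hpq.symm]) (by simp [hpq.symm])
    have z₈ := hzero p q q q (by simp [hpq]) (by simp [hpq])
    have z₉ := hzero p q p q (by simp [hpq]) (by simp [hpq])
    have z₀ := hzero q p q p (by simp [hpq.symm]) (by simp [hpq.symm])
    simp only [if_true, if_neg hpq.symm, ← mul_add, ← mul_sub, hs4, z₁, z₂, z₃, z₄, z₅, z₆, z₇,
      z₈, z₉, z₀] at e₁ e₂ e₃ e₄ e₅
    refine ⟨?_, ?_, ?_⟩
    · linear_combination e₁ - e₂
    · linear_combination e₃ - e₄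
    · linear_combination e₅ - e₁ + (e₃ - e₄) / 2
  have hmove {p q r : n} (hpq : p ≠ q) (hrp : r ≠ p) (hrq : r ≠ q) :
      T p p r r = T q q r r := by
    have e := hhad hpq p p r r
    have z₁ := hzero p q r r (by simp [hpq]) (by simp [hrp.symm])
    have z₂ := hzero q p r r (by simp [hpq.symm]) (by simp [hrq.symm])
    simp only [if_true, if_neg hrp, if_neg hrq, ← mul_add, hs2, z₁, z₂] at e
    linear_combination 2 * e
  rcases subsingleton_or_nontrivial n with hn | hn
  · rcases isEmpty_or_nonempty n with h | ⟨⟨p⟩⟩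
    · exact ⟨0, 0, fun i => h.elim i⟩
    · refine ⟨T p p p p, 0, fun i k j l => ?_⟩
      simp [Subsingleton.elim i p, Subsingleton.elim j p, Subsingleton.elim k p,
        Subsingleton.elim l p]
  · obtain ⟨p, q, hpq⟩ := exists_pair_ne n
    have hc (i : n) : T i i i i = T p p p p := by
      by_cases h : i = p
      · rw [h]
      · exact (hpair h).1
    have ha {i j : n} (hij : i ≠ j) : T i i j j = T p p q q := by
      have hmove' {a b r : n} (hra : r ≠ a) (hrb : r ≠ b) : T a a r r = T b b r r := by
        by_cases hab : a = b
        · rw [hab]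
        · exact hmove hab hra hrb
      by_cases hjp : j = p
      · subst hjp
        rw [(hpair hpq).2.1]
        exact hmove' hij.symm hpq
      · rw [hmove' hij.symm hjp, (hpair (Ne.symm hjp)).2.1, (hpair hpq).2.1]
        exact hmove' (Ne.symm hjp) hpq
    refine ⟨T p p q q, T p p p p - T p p q q, fun i k j l => ?_⟩
    by_cases h₁ : i = k ∧ j = l
    · obtain ⟨rfl, rfl⟩ := h₁
      by_cases hij : i = j
      · subst hij
        simp [hc]
      · simp [hij, ha hij]
    · by_cases h₂ : i = l ∧ j = k
      · obtain ⟨rfl, rfl⟩ := h₂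
        have hij : i ≠ j := fun h => h₁ ⟨h, h.symm⟩
        simp [hij, (hpair hij).2.2, hc, ha hij]
      · simp [h₁, h₂, hzero i k j l h₁ h₂]

section Haar

variable [MeasurableSpace (unitaryGroup n ℂ)] [BorelSpace (unitaryGroup n ℂ)]
  (μ : Measure (unitaryGroup n ℂ)) [IsProbabilityMeasure μ]

/-- The entry `(i, k)` of the conjugate `U A U*`. -/
noncomputable def conjEntry (A : Matrix n n ℂ) (i k : n) (U : unitaryGroup n ℂ) : ℂ :=
  ((U : Matrix n n ℂ) * A * star (U : Matrix n n ℂ)) i k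

omit [MeasurableSpace (unitaryGroup n ℂ)] [BorelSpace (unitaryGroup n ℂ)] in
lemma continuous_conjEntry (A : Matrix n n ℂ) (i k : n) : Continuous (conjEntry A i k) := by
  have h : Continuous fun U : unitaryGroup n ℂ => (U : Matrix n n ℂ) := continuous_subtype_val
  exact ((h.matrix_mul continuous_const).matrix_mul h.star).matrix_elem i k

omit [MeasurableSpace (unitaryGroup n ℂ)] [BorelSpace (unitaryGroup n ℂ)] in
lemma conjEntry_mul_left (A : Matrix n n ℂ) (i k : n) (V U : unitaryGroup n ℂ) :
    conjEntry A i k (V * U) = ∑ i', (V : Matrix n n ℂ) i i' *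
      ∑ k', star ((V : Matrix n n ℂ) k k') * conjEntry A i' k' U := by
  have : conjEntry A i k (V * U) = ((V : Matrix n n ℂ) *
      (((U : Matrix n n ℂ) * A * star (U : Matrix n n ℂ)) * star (V : Matrix n n ℂ))) i k := by
    simp [conjEntry, Matrix.mul_assoc]
  rw [this, mul_apply]
  refine Finset.sum_congr rfl fun i' _ => ?_
  rw [mul_apply]
  simp [conjEntry, mul_comm, star_apply]

omit [MeasurableSpace (unitaryGroup n ℂ)] [BorelSpace (unitaryGroup n ℂ)] in
lemma trace_conj_unitary (A : Matrix n n ℂ) (U : unitaryGroup n ℂ) :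
    ((U : Matrix n n ℂ) * A * star (U : Matrix n n ℂ)).trace = A.trace := by
  rw [trace_mul_cycle, UnitaryGroup.star_mul_self, Matrix.one_mul]

instance : CompactSpace (unitaryGroup n ℂ) := by
  refine isCompact_iff_compactSpace.mp (IsCompact.of_isClosed_subset
    (isCompact_univ_pi fun _ : n => isCompact_univ_pi fun _ : n =>
      isCompact_closedBall (0 : ℂ) 1) ?_ ?_)
  · have : ((unitaryGroup n ℂ : Submonoid (Matrix n n ℂ)) : Set (Matrix n n ℂ)) =
        {V | V * star V = 1} := by
      ext V
      exact mem_unitaryGroup_iff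
    rw [this]
    exact isClosed_eq (continuous_id.matrix_mul continuous_id.star) continuous_const
  · intro V hV i _ j _
    simpa using entry_norm_bound_of_unitary hV i j

lemma integrable_conjEntry_mul (A B : Matrix n n ℂ) (i k j l : n) :
    Integrable (fun U => conjEntry A i k U * conjEntry B j l U) μ := by
  exact ((continuous_conjEntry A i k).mul
    (continuous_conjEntry B j l)).integrable_of_hasCompactSupport (.of_compactSpace _)

omit [DecidableEq n] in
lemma sum_mul_sum_mul_sum_mul_sum (a b c d : n → ℂ) (f g : n → n → ℂ) :
    (∑ i, a i * ∑ k, b k * f i k) * (∑ j, c j * ∑ l, d l * g j l) =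
      ∑ i, ∑ k, ∑ j, ∑ l, (a i * (b k * (c j * d l))) * (f i k * g j l) := by
  rw [Finset.sum_mul]
  refine Finset.sum_congr rfl fun i _ => ?_
  rw [Finset.mul_sum _ (fun k => b k * f i k), Finset.sum_mul]
  refine Finset.sum_congr rfl fun k _ => ?_
  rw [Finset.mul_sum]
  refine Finset.sum_congr rfl fun j _ => ?_
  rw [Finset.mul_sum, Finset.mul_sum]
  refine Finset.sum_congr rfl fun l _ => ?_
  ring

/-- The Haar second moment of the adjoint action of the unitary group. -/
lemma exists_integral_conjEntry_mul [μ.IsMulLeftInvariant] (A B : Matrix n n ℂ) :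
    ∃ α β : ℂ,
      (∀ i k j l, ∫ U, conjEntry A i k U * conjEntry B j l U ∂μ =
        α * (if i = k ∧ j = l then 1 else 0) + β * (if i = l ∧ j = k then 1 else 0)) ∧
      α * (Fintype.card n) ^ 2 + β * Fintype.card n = A.trace * B.trace ∧
      α * Fintype.card n + β * (Fintype.card n) ^ 2 = (A * B).trace := by
  have hint := integrable_conjEntry_mul μ A B
  obtain ⟨α, β, h⟩ := exists_eq_of_unitary_invariant
    (fun i k j l => ∫ U, conjEntry A i k U * conjEntry B j l U ∂μ) (by
      intro V hV i k j l
      rw [← integral_mul_left_eq_self _ (⟨V, hV⟩ : unitaryGroup n ℂ)]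
      simp only [conjEntry_mul_left, sum_mul_sum_mul_sum_mul_sum]
      simp only [Finset.mul_sum]
      have hint' (c : ℂ) (i k j l : n) := (hint i k j l).const_mul c
      rw [integral_finsetSum _ fun _ _ => integrable_finsetSum _ fun _ _ =>
        integrable_finsetSum _ fun _ _ => integrable_finsetSum _ fun _ _ => hint' _ _ _ _ _]
      refine Finset.sum_congr rfl fun i' _ => ?_
      rw [integral_finsetSum _ fun _ _ =>
        integrable_finsetSum _ fun _ _ => integrable_finsetSum _ fun _ _ => hint' _ _ _ _ _]
      refine Finset.sum_congr rfl fun k' _ => ?_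
      rw [integral_finsetSum _ fun _ _ => integrable_finsetSum _ fun _ _ => hint' _ _ _ _ _]
      refine Finset.sum_congr rfl fun j' _ => ?_
      rw [integral_finsetSum _ fun _ _ => hint' _ _ _ _ _]
      refine Finset.sum_congr rfl fun l' _ => ?_
      rw [integral_const_mul]
      ring)
  have hsymm (i j : n) : (i = j ∧ j = i) ↔ i = j := ⟨And.left, fun h => ⟨h, h.symm⟩⟩
  refine ⟨α, β, h, ?_, ?_⟩
  · have e (U : unitaryGroup n ℂ) :
        ∑ i, ∑ j, conjEntry A i i U * conjEntry B j j U = A.trace * B.trace := by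
      rw [← Finset.sum_mul_sum]
      congr 1
      · exact trace_conj_unitary A U
      · exact trace_conj_unitary B U
    have := congrArg (fun f => ∫ U, f U ∂μ) (funext e)
    simp only [integral_const, probReal_univ, one_smul] at this
    rw [integral_finsetSum _ fun _ _ => integrable_finsetSum _ fun _ _ => hint _ _ _ _] at this
    rw [← this]
    simp_rw [integral_finsetSum _ fun _ _ => hint _ _ _ _, h]
    simp only [hsymm, Finset.sum_add_distrib, ← Finset.mul_sum, and_self, if_true,
      Finset.sum_ite_eq, Finset.mem_univ, Finset.sum_const, Finset.card_univ, nsmul_eq_mul]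
    ring
  · have e (U : unitaryGroup n ℂ) :
        ∑ i, ∑ j, conjEntry A i j U * conjEntry B j i U = (A * B).trace := by
      have h : (U : Matrix n n ℂ) * (A * B) * star (U : Matrix n n ℂ) =
          ((U : Matrix n n ℂ) * A * star (U : Matrix n n ℂ)) *
            ((U : Matrix n n ℂ) * B * star (U : Matrix n n ℂ)) := by
        simp only [Matrix.mul_assoc]
        rw [← Matrix.mul_assoc (star (U : Matrix n n ℂ)) (U : Matrix n n ℂ),
          UnitaryGroup.star_mul_self, Matrix.one_mul]
      rw [← trace_conj_unitary (A * B) U, h]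
      simp [trace, mul_apply, conjEntry]
    have := congrArg (fun f => ∫ U, f U ∂μ) (funext e)
    simp only [integral_const, probReal_univ, one_smul] at this
    rw [integral_finsetSum _ fun _ _ => integrable_finsetSum _ fun _ _ => hint _ _ _ _] at this
    rw [← this]
    simp_rw [integral_finsetSum _ fun _ _ => hint _ _ _ _, h]
    simp only [hsymm, Finset.sum_add_distrib, ← Finset.mul_sum, and_self, if_true,
      Finset.sum_ite_eq, Finset.mem_univ, Finset.sum_const, Finset.card_univ, nsmul_eq_mul]
    ring

end Haar

section Decoupling

variable {dC d₁ d₂ : ℕ} (ψ : Matrix (Fin dC × (Fin d₁ × Fin d₂)) (Fin dC × (Fin d₁ × Fin d₂)) ℂ)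

/-- The block of `ψ` indexed by the pair `(c, c')` of basis vectors of the reference. -/
def referenceBlock (c c' : Fin dC) : Matrix (Fin d₁ × Fin d₂) (Fin d₁ × Fin d₂) ℂ :=
  ψ.submatrix (Prod.mk c) (Prod.mk c')

lemma trace_referenceBlock (c c' : Fin dC) :
    (referenceBlock ψ c c').trace = ptraceC ψ c c' := rfl

lemma trace_mul_self_eq_sum_referenceBlock :
    (ψ * ψ).trace =
      ∑ c, ∑ c', (referenceBlock ψ c c' * referenceBlock ψ c' c).trace := by
  simp only [trace, diag, mul_apply, referenceBlock, submatrix_apply]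
  rw [Fintype.sum_prod_type]
  refine Finset.sum_congr rfl fun c _ => ?_
  rw [Finset.sum_comm]
  rw [Fintype.sum_prod_type]
  refine Finset.sum_congr rfl fun c' _ => ?_
  rw [Finset.sum_comm]

lemma sigmaCA2_apply (U : unitaryGroup (Fin d₁ × Fin d₂) ℂ) (p q : Fin dC × Fin d₂) :
    sigmaCA2 ψ U p q =
      ∑ a₁, conjEntry (referenceBlock ψ p.1 q.1) (a₁, p.2) (a₁, q.2) U := by
  simp only [sigmaCA2, of_apply]
  refine Finset.sum_congr rfl fun a₁ _ => ?_
  simp only [conjEntry, mul_apply, conjTranspose_apply, star_apply, kroneckerMap_apply,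
    referenceBlock, submatrix_apply]
  simp only [Fintype.sum_prod_type (α₁ := Fin dC), one_apply, ite_mul, one_mul, zero_mul,
    Finset.sum_ite_irrel, Finset.sum_const_zero, Finset.sum_ite_eq, Finset.mem_univ, if_true,
    apply_ite (star : ℂ → ℂ), star_zero, mul_ite, mul_zero]

lemma trace_sigmaCA2_mul_self (U : unitaryGroup (Fin d₁ × Fin d₂) ℂ) :
    (sigmaCA2 ψ U * sigmaCA2 ψ U).trace =
      ∑ c, ∑ c', ∑ a₂, ∑ a₂', ∑ a₁, ∑ a₁',
        conjEntry (referenceBlock ψ c c') (a₁, a₂) (a₁, a₂') U *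
          conjEntry (referenceBlock ψ c' c) (a₁', a₂') (a₁', a₂) U := by
  simp only [trace, diag, mul_apply, sigmaCA2_apply, Finset.sum_mul_sum, Fintype.sum_prod_type]
  refine Finset.sum_congr rfl fun c _ => ?_
  rw [Finset.sum_comm]

lemma trace_sigmaCA2_mul_kronecker (U : unitaryGroup (Fin d₁ × Fin d₂) ℂ) :
    (sigmaCA2 ψ U * (ptraceC ψ ⊗ₖ ((d₂ : ℂ)⁻¹ • (1 : Matrix (Fin d₂) (Fin d₂) ℂ)))).trace =
      (d₂ : ℂ)⁻¹ * (ptraceC ψ * ptraceC ψ).trace := by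
  have h (c c' : Fin dC) : ∑ a₂, sigmaCA2 ψ U (c, a₂) (c', a₂) = ptraceC ψ c c' := by
    simp only [sigmaCA2_apply]
    rw [Finset.sum_comm, ← Fintype.sum_prod_type'
      (f := fun a₁ a₂ => conjEntry (referenceBlock ψ c c') (a₁, a₂) (a₁, a₂) U)]
    exact trace_conj_unitary (referenceBlock ψ c c') U
  simp only [trace, diag, mul_apply, Fintype.sum_prod_type, kroneckerMap_apply, Matrix.smul_apply,
    one_apply, smul_eq_mul, mul_ite, mul_one, mul_zero, Finset.sum_ite_eq', Finset.mem_univ,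
    if_true, Finset.mul_sum]
  refine Finset.sum_congr rfl fun c _ => ?_
  rw [Finset.sum_comm]
  refine Finset.sum_congr rfl fun c' _ => ?_
  rw [← Finset.sum_mul, h]
  ring

lemma trace_kronecker_mul_self (hd₂ : (d₂ : ℂ) ≠ 0) :
    ((ptraceC ψ ⊗ₖ ((d₂ : ℂ)⁻¹ • (1 : Matrix (Fin d₂) (Fin d₂) ℂ))) *
      (ptraceC ψ ⊗ₖ ((d₂ : ℂ)⁻¹ • (1 : Matrix (Fin d₂) (Fin d₂) ℂ)))).trace =
      (d₂ : ℂ)⁻¹ * (ptraceC ψ * ptraceC ψ).trace := by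
  rw [← mul_kronecker_mul, trace_kronecker]
  simp
  field_simp

lemma trace_sub_mul_self (hd₂ : (d₂ : ℂ) ≠ 0) (U : unitaryGroup (Fin d₁ × Fin d₂) ℂ) :
    ((sigmaCA2 ψ U - ptraceC ψ ⊗ₖ ((d₂ : ℂ)⁻¹ • (1 : Matrix (Fin d₂) (Fin d₂) ℂ))) *
      (sigmaCA2 ψ U - ptraceC ψ ⊗ₖ ((d₂ : ℂ)⁻¹ • (1 : Matrix (Fin d₂) (Fin d₂) ℂ)))).trace =
      (sigmaCA2 ψ U * sigmaCA2 ψ U).trace - (d₂ : ℂ)⁻¹ * (ptraceC ψ * ptraceC ψ).trace := by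
  rw [sub_mul, mul_sub, mul_sub, trace_sub, trace_sub, trace_sub,
    trace_mul_comm (ptraceC ψ ⊗ₖ _) (sigmaCA2 ψ U), trace_sigmaCA2_mul_kronecker,
    trace_kronecker_mul_self ψ hd₂]
  ring

variable [MeasurableSpace (unitaryGroup (Fin d₁ × Fin d₂) ℂ)]
  [BorelSpace (unitaryGroup (Fin d₁ × Fin d₂) ℂ)]
  (μ : Measure (unitaryGroup (Fin d₁ × Fin d₂) ℂ)) [IsProbabilityMeasure μ]

lemma integral_sum_conjEntry_mul [μ.IsMulLeftInvariant] (hd₁ : (d₁ : ℂ) ≠ 0) (hd₂ : (d₂ : ℂ) ≠ 0)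
    (hN : (d₁ * d₂ : ℂ) ^ 2 - 1 ≠ 0) (A B : Matrix (Fin d₁ × Fin d₂) (Fin d₁ × Fin d₂) ℂ) :
    ∑ a₂, ∑ a₂', ∑ a₁, ∑ a₁',
        ∫ U, conjEntry A (a₁, a₂) (a₁, a₂') U * conjEntry B (a₁', a₂') (a₁', a₂) U ∂μ =
      (d₂ : ℂ)⁻¹ * (A.trace * B.trace) +
        ((d₂ : ℂ) ^ 2 - 1) * ((d₁ * d₂ : ℂ) * (A * B).trace - A.trace * B.trace)
          / ((d₂ : ℂ) * ((d₁ * d₂ : ℂ) ^ 2 - 1)) := by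
  obtain ⟨α, β, h, h₁, h₂⟩ := exists_integral_conjEntry_mul μ A B
  have e₁ (a₁ a₁' : Fin d₁) (a₂ a₂' : Fin d₂) :
      ((a₁, a₂) = (a₁, a₂') ∧ (a₁', a₂') = (a₁', a₂)) ↔ a₂ = a₂' := by grind
  have e₂ (a₁ a₁' : Fin d₁) (a₂ a₂' : Fin d₂) :
      ((a₁, a₂) = (a₁', a₂) ∧ (a₁', a₂') = (a₁, a₂')) ↔ a₁ = a₁' := by grind
  simp only [h, e₁, e₂, Finset.sum_add_distrib, ← Finset.mul_sum, Finset.sum_ite_eq,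
    Finset.mem_univ, if_true, Finset.sum_const, Finset.card_univ, nsmul_eq_mul, Fintype.card_fin]
  rw [← h₁, ← h₂, Fintype.card_prod, Fintype.card_fin, Fintype.card_fin]
  push_cast
  rw [mul_pow] at hN
  field_simp
  ring

end Decoupling

end Matrix

/-- The quantum instance of the paper's decoupling Corollary in 2-norm: the Haar-averaged
squared Hilbert–Schmidt distance of `σ(U)^{CA₂}` from the decoupled state `ψ_C ⊗ 1/d₂`. -/
theorem stmt9 (dC d₁ d₂ : ℕ) (hdC : 1 ≤ dC) (hd₁ : 1 ≤ d₁) (hd₂ : 1 ≤ d₂)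
    (hd : 2 ≤ d₁ * d₂)
    (ψ : Matrix (Fin dC × (Fin d₁ × Fin d₂)) (Fin dC × (Fin d₁ × Fin d₂)) ℂ)
    (hψ : ψ.PosSemidef) (htr : ψ.trace = 1)
    [MeasurableSpace (Matrix.unitaryGroup (Fin d₁ × Fin d₂) ℂ)]
    [BorelSpace (Matrix.unitaryGroup (Fin d₁ × Fin d₂) ℂ)]
    (μ : Measure (Matrix.unitaryGroup (Fin d₁ × Fin d₂) ℂ))
    [μ.IsHaarMeasure] [IsProbabilityMeasure μ] :
    ∫ U, ((sigmaCA2 ψ U - ptraceC ψ ⊗ₖ ((d₂ : ℂ)⁻¹ • (1 : Matrix (Fin d₂) (Fin d₂) ℂ))) *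
          (sigmaCA2 ψ U - ptraceC ψ ⊗ₖ ((d₂ : ℂ)⁻¹ • (1 : Matrix (Fin d₂) (Fin d₂) ℂ)))).trace ∂μ
      = ((d₂ : ℂ) ^ 2 - 1) *
            ((d₁ * d₂ : ℂ) * (ψ * ψ).trace - (ptraceC ψ * ptraceC ψ).trace)
          / ((d₂ : ℂ) * ((d₁ * d₂ : ℂ) ^ 2 - 1)) := by
  have hd₁' : (d₁ : ℂ) ≠ 0 := by exact_mod_cast (by omega : d₁ ≠ 0)
  have hd₂' : (d₂ : ℂ) ≠ 0 := by exact_mod_cast (by omega : d₂ ≠ 0)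
  have hN : (d₁ * d₂ : ℂ) ^ 2 - 1 ≠ 0 := by
    have h : (d₁ * d₂) ^ 2 ≠ 1 := by nlinarith
    rw [sub_ne_zero]
    exact_mod_cast h
  have hint (c c' : Fin dC) := integrable_conjEntry_mul μ (referenceBlock ψ c c')
    (referenceBlock ψ c' c)
  simp only [trace_sub_mul_self ψ hd₂', trace_sigmaCA2_mul_self]
  rw [integral_sub (integrable_finsetSum _ fun _ _ => integrable_finsetSum _ fun _ _ =>
    integrable_finsetSum _ fun _ _ => integrable_finsetSum _ fun _ _ =>
    integrable_finsetSum _ fun _ _ => integrable_finsetSum _ fun _ _ => hint _ _ _ _ _ _)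
    (integrable_const _)]
  rw [integral_finsetSum _ fun _ _ => integrable_finsetSum _ fun _ _ =>
    integrable_finsetSum _ fun _ _ => integrable_finsetSum _ fun _ _ =>
    integrable_finsetSum _ fun _ _ => integrable_finsetSum _ fun _ _ => hint _ _ _ _ _ _]
  simp_rw [integral_finsetSum _ fun _ _ => integrable_finsetSum _ fun _ _ =>
    integrable_finsetSum _ fun _ _ =>
    integrable_finsetSum _ fun _ _ => integrable_finsetSum _ fun _ _ => hint _ _ _ _ _ _,
    integral_finsetSum _ fun _ _ => integrable_finsetSum _ fun _ _ =>
    integrable_finsetSum _ fun _ _ => integrable_finsetSum _ fun _ _ => hint _ _ _ _ _ _,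
    integral_finsetSum _ fun _ _ => integrable_finsetSum _ fun _ _ =>
    integrable_finsetSum _ fun _ _ => hint _ _ _ _ _ _,
    integral_finsetSum _ fun _ _ => integrable_finsetSum _ fun _ _ => hint _ _ _ _ _ _,
    integral_finsetSum _ fun _ _ => hint _ _ _ _ _ _,
    integral_sum_conjEntry_mul μ hd₁' hd₂' hN, trace_referenceBlock]
  have hP : (ptraceC ψ * ptraceC ψ).trace = ∑ c, ∑ c', ptraceC ψ c c' * ptraceC ψ c' c := by
    simp [trace, mul_apply]
  rw [trace_mul_self_eq_sum_referenceBlock, hP]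
  simp only [Finset.sum_add_distrib, ← Finset.mul_sum, ← Finset.sum_div, Finset.sum_sub_distrib,
    integral_const, probReal_univ, one_smul]
  ring
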